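/- Let θ be a cylindric diagram in C_ω. For every standard tableau T ∈ LE(θ) and every n ≥ 1, the element w_{θ,T}[n] of the affine Weyl group W is P_θ-pluscule and fully commutative. -/

import Mathlib

/-!
The two claims are proved separately: the tableau gives the pluscule property, and the pluscule
property alone forces full commutativity.

**Pluscule.** A cell `x` of `θ` is a bottom cell iff `x + (1, 1) ∉ θ`, and then the coefficient of
`P_θ` at its content is `[x + (0, 1) ∈ θ] + [x + (1, 0) ∈ θ] - 1` (`aC_eq`). Hence removing a
minimal cell of content `i`, where the coefficient is `-1`, changes the coefficients by the `i`-th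
row of the Cartan matrix (`aC_remove`), that is, `P_{θ \ {x}} = s_i P_θ` (`pairP_remove`). A
tableau removes minimal cells one at a time. An inversion `β` of `s_i v` is either `α_i` or has
`s_i β` an inversion of `v` (`invSet_cons`), so induction on `n` gives `⟨P_θ, β^∨⟩ = -1`.

**Root system.** `invSet_cons` needs that a real root is positive or negative. Real roots are
integral vectors `f` on the cycle `ℤ/κℤ` with `∑ (f_i - f_{i+1})² = 2`. This form is even, vanishes
only on constants, and is superadditive for the decomposition into positive and negative parts, so
a vector with both signs has norm at least `4` (`sign_of_norm_two`). The exchange property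
(`deletion`) follows from `invSet_cons` and the invariance of the pairing.

**Full commutativity.** Let a linear form be `-1` on all inversions of `w`, and let two reduced
words of `w` start with `i ≠ j`. Then `α_i` and `α_j` are inversions; were they not orthogonal,
`s_i α_j` would be an inversion on which the form is below `-1` (`cartan_eq_zero_of_inv`). So `s_i`
and `s_j` commute, exchange produces `w = s_i s_j M = s_j s_i M` with both words reduced, and
induction on the length joins the two given words by commutations (`fullyComm_aux`).
-/

namespace CylPaper

/-! ## The cylinder and its order -/

abbrev Z2 : Type := ℤ × ℤ

/-- The partial order on ℤ²: (a,b) ≤ (c,d) iff a ≥ c and b ≥ d. -/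
def le2 (x y : Z2) : Prop := y.1 ≤ x.1 ∧ y.2 ≤ x.2

/-- The period ω = (m, -ℓ). -/
def om (m l : ℕ) : Z2 := ((m : ℤ), -(l : ℤ))

/-- The cylinder C_ω = ℤ²/ℤω. -/
abbrev Cyl (m l : ℕ) : Type := Z2 ⧸ AddSubgroup.zmultiples (om m l)

/-- The natural projection π : ℤ² → C_ω. -/
def pr (m l : ℕ) : Z2 →+ Cyl m l := QuotientAddGroup.mk' _

/-- The induced order relation on the cylinder: x ≤ y iff there are lifts with x̃ ≤ ỹ. -/
def cle (m l : ℕ) (x y : Cyl m l) : Prop :=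
  ∃ a b : Z2, pr m l a = x ∧ pr m l b = y ∧ le2 a b

/-- A cylindric diagram: a non-trivial order filter of C_ω. -/
def IsCylindric (m l : ℕ) (θ : Set (Cyl m l)) : Prop :=
  θ.Nonempty ∧ θ ≠ Set.univ ∧ ∀ x ∈ θ, ∀ y, cle m l x y → y ∈ θ

/-- A periodic diagram of period ω: a non-trivial order filter of ℤ² with Θ + ω = Θ. -/
def IsPeriodic (m l : ℕ) (Θ : Set Z2) : Prop :=
  Θ.Nonempty ∧ Θ ≠ Set.univ ∧ (∀ x ∈ Θ, ∀ y, le2 x y → y ∈ Θ) ∧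
    (fun p => p + om m l) '' Θ = Θ

/-- A proper order ideal ξ of the sub-poset θ of C_ω. -/
def IsProperIdealOf (m l : ℕ) (θ ξ : Set (Cyl m l)) : Prop :=
  ξ ⊆ θ ∧ ξ ≠ θ ∧ ∀ x ∈ ξ, ∀ y ∈ θ, cle m l y x → y ∈ ξ

/-- A proper order ideal of the whole cylinder C_ω. -/
def IsProperIdealC (m l : ℕ) (J : Set (Cyl m l)) : Prop :=
  J ≠ Set.univ ∧ ∀ x ∈ J, ∀ y, cle m l y x → y ∈ J

/-- A proper order filter of the whole cylinder C_ω. -/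
def IsProperFilterC (m l : ℕ) (J : Set (Cyl m l)) : Prop :=
  J ≠ Set.univ ∧ ∀ x ∈ J, ∀ y, cle m l x y → y ∈ J

/-! ## The content map -/

/-- The content on ℤ²: (a,b) ↦ b - a mod κ (κ = m + ℓ). -/
def conHom (m l : ℕ) : Z2 →+ ZMod (m + l) where
  toFun p := ((p.2 - p.1 : ℤ) : ZMod (m + l))
  map_zero' := by simp
  map_add' a b := by
    simp only [Prod.fst_add, Prod.snd_add]
    push_cast
    ring

lemma conHom_om (m l : ℕ) : conHom m l (om m l) = 0 := by
  have h : ((m + l : ℕ) : ZMod (m + l)) = 0 := ZMod.natCast_self _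
  show ((((om m l).2 - (om m l).1 : ℤ)) : ZMod (m + l)) = 0
  simp only [om]
  push_cast at h ⊢
  linear_combination -h

/-- The content map con : C_ω → ℤ/κℤ. -/
def con (m l : ℕ) : Cyl m l →+ ZMod (m + l) :=
  QuotientAddGroup.lift _ (conHom m l) (by
    intro x hx
    obtain ⟨k, rfl⟩ := AddSubgroup.mem_zmultiples_iff.mp hx
    simp only [AddMonoidHom.mem_ker, map_zsmul, conHom_om, smul_zero])

/-! ## The affine root system of type A_{κ-1}^{(1)} -/

/-- h*, with coordinates in the basis {α_i (i ∈ ℤ/κℤ), Λ₀}: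
`(c, t)` stands for `Σ_i c_i α_i + t Λ₀`. -/
abbrev Hw (κ : ℕ) : Type := (ZMod κ → ℚ) × ℚ

/-- The affine Cartan matrix of type A_{κ-1}^{(1)} (valid for κ ≥ 2). -/
def cartan (κ : ℕ) (i j : ZMod κ) : ℚ :=
  (if i = j then 2 else 0) + (if i - j = 1 then -1 else 0) + (if i - j = -1 then -1 else 0)

/-- The simple root α_i. -/
def alphaR (κ : ℕ) (i : ZMod κ) : Hw κ := (Pi.single i 1, 0)

/-- The null root δ = Σ_i α_i. -/
def deltaR (κ : ℕ) : Hw κ := (fun _ => 1, 0)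

/-- The pairing ⟨ζ, α_i^∨⟩. -/
noncomputable def pairSimple (κ : ℕ) (ζ : Hw κ) (i : ZMod κ) : ℚ :=
  (∑ᶠ j, ζ.1 j * cartan κ i j) + ζ.2 * (if i = 0 then 1 else 0)

/-- The pairing ⟨ζ, β^∨⟩ where β = Σ_i k_i α_i lies in the root lattice,
so β^∨ = Σ_i k_i α_i^∨. -/
noncomputable def pairCo (κ : ℕ) (ζ β : Hw κ) : ℚ := ∑ᶠ i, β.1 i * pairSimple κ ζ i

/-- The simple reflection s_i : ζ ↦ ζ - ⟨ζ, α_i^∨⟩ α_i, as a map on h*. -/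
noncomputable def sFun (κ : ℕ) (i : ZMod κ) (ζ : Hw κ) : Hw κ :=
  ζ - pairSimple κ ζ i • alphaR κ i

/-- The element s_{i₁} s_{i₂} ⋯ s_{i_r} of the affine Weyl group
given by a word [i₁, i₂, …, i_r]. -/
noncomputable def wordProd (κ : ℕ) (L : List (ZMod κ)) : Hw κ → Hw κ :=
  (L.map (sFun κ)).foldr (· ∘ ·) id

/-- Membership in the affine Weyl group W (generated by the s_i). -/
def Wmem (κ : ℕ) (w : Hw κ → Hw κ) : Prop := ∃ L : List (ZMod κ), wordProd κ L = w

/-- The Coxeter length: the least r such that w is a product of r simple reflections. -/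
noncomputable def len (κ : ℕ) (w : Hw κ → Hw κ) : ℕ :=
  sInf {r : ℕ | ∃ L : List (ZMod κ), L.length = r ∧ wordProd κ L = w}

/-- Q₊ = Σ_i ℤ≥0 α_i. -/
def QPos (κ : ℕ) : Set (Hw κ) := {x | x.2 = 0 ∧ ∀ i, ∃ n : ℕ, x.1 i = (n : ℚ)}

/-- The set R = WΠ of real roots. -/
def Rset (κ : ℕ) : Set (Hw κ) :=
  {β | ∃ (L : List (ZMod κ)) (i : ZMod κ), β = wordProd κ L (alphaR κ i)}

/-- Positive real roots R₊ = R ∩ Q₊. -/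
def Rpos (κ : ℕ) : Set (Hw κ) := Rset κ ∩ QPos κ

/-- Negative real roots R₋ = -R₊. -/
def Rneg (κ : ℕ) : Set (Hw κ) := {β | -β ∈ Rpos κ}

/-- The inversion set R(w) = R₊ ∩ w R₋. -/
def invSet (κ : ℕ) (w : Hw κ → Hw κ) : Set (Hw κ) := Rpos κ ∩ (w '' Rneg κ)

/-- The weak right Bruhat order on W. -/
def wble (κ : ℕ) (v w : Hw κ → Hw κ) : Prop :=
  Relation.ReflTransGen
    (fun u u' => ∃ i : ZMod κ, u' = u ∘ sFun κ i ∧ len κ u' = len κ u + 1) v w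

/-- The weak Bruhat interval [e, w]. -/
def bint (κ : ℕ) (w : Hw κ → Hw κ) : Set (Hw κ → Hw κ) :=
  {x | wble κ id x ∧ wble κ x w}

/-- A single commutation move on words: swap adjacent letters i, j with i - j ≠ 0, ±1. -/
def CommMove (κ : ℕ) (L1 L2 : List (ZMod κ)) : Prop :=
  ∃ (u v : List (ZMod κ)) (i j : ZMod κ),
    i - j ≠ 0 ∧ i - j ≠ 1 ∧ i - j ≠ -1 ∧
    L1 = u ++ i :: j :: v ∧ L2 = u ++ j :: i :: v

/-- A word is reduced if its length equals the Coxeter length of its product. -/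
def IsReducedWord (κ : ℕ) (L : List (ZMod κ)) : Prop :=
  len κ (wordProd κ L) = L.length

/-- Fully commutative: any reduced word for w can be obtained from any other
using only commutation moves. -/
def FullyComm (κ : ℕ) (w : Hw κ → Hw κ) : Prop :=
  ∀ L1 L2 : List (ZMod κ),
    IsReducedWord κ L1 → wordProd κ L1 = w →
    IsReducedWord κ L2 → wordProd κ L2 = w →
    Relation.ReflTransGen (CommMove κ) L1 L2

/-! ## Hooks, bottom set and weights attached to a cylindric diagram -/

/-- α(x) = α_{con(x)}. -/
def alC (m l : ℕ) (x : Cyl m l) : Hw (m + l) := alphaR (m + l) (con m l x)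

/-- arm(x) = {x + π(0,k) : k ≥ 1} ∩ θ. -/
def armSet (m l : ℕ) (θ : Set (Cyl m l)) (x : Cyl m l) : Set (Cyl m l) :=
  {y | y ∈ θ ∧ ∃ k : ℕ, 1 ≤ k ∧ y = x + pr m l (0, (k : ℤ))}

/-- leg(x) = {x + π(k,0) : k ≥ 1} ∩ θ. -/
def legSet (m l : ℕ) (θ : Set (Cyl m l)) (x : Cyl m l) : Set (Cyl m l) :=
  {y | y ∈ θ ∧ ∃ k : ℕ, 1 ≤ k ∧ y = x + pr m l ((k : ℤ), 0)}

/-- The colored hook length hk(x) = α(x) + Σ_{y∈arm(x)} α(y) + Σ_{y∈leg(x)} α(y). -/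
noncomputable def hk (m l : ℕ) (θ : Set (Cyl m l)) (x : Cyl m l) : Hw (m + l) :=
  alC m l x + (∑ᶠ y ∈ armSet m l θ x, alC m l y) + (∑ᶠ y ∈ legSet m l θ x, alC m l y)

/-- x is the minimum cell b_i of content i in θ. -/
def IsBottomCell (m l : ℕ) (θ : Set (Cyl m l)) (i : ZMod (m + l)) (x : Cyl m l) : Prop :=
  x ∈ θ ∧ con m l x = i ∧ ∀ y ∈ θ, con m l y = i → cle m l x y

/-- The bottom set Γ = {b_i : i ∈ ℤ/κℤ}. -/
def btm (m l : ℕ) (θ : Set (Cyl m l)) : Set (Cyl m l) :=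
  {x | ∃ i, IsBottomCell m l θ i x}

/-- The maximal elements Γ_max of the bottom set. -/
def btmMax (m l : ℕ) (θ : Set (Cyl m l)) : Set (Cyl m l) :=
  {x | x ∈ btm m l θ ∧ ∀ y ∈ btm m l θ, cle m l x y → y = x}

/-- The minimal elements Γ_min of the bottom set. -/
def btmMin (m l : ℕ) (θ : Set (Cyl m l)) : Set (Cyl m l) :=
  {x | x ∈ btm m l θ ∧ ∀ y ∈ btm m l θ, cle m l y x → y = x}

open Classical in
/-- The coefficient a_i of Λ_i in the predominant weight P_θ:
1 if b_i ∈ Γ_max, -1 if b_i ∈ Γ_min, 0 otherwise. -/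
noncomputable def aC (m l : ℕ) (θ : Set (Cyl m l)) (i : ZMod (m + l)) : ℚ :=
  if ∃ x, IsBottomCell m l θ i x ∧ x ∈ btmMax m l θ then 1
  else if ∃ x, IsBottomCell m l θ i x ∧ x ∈ btmMin m l θ then -1 else 0

/-- The pairing ⟨P_θ, β^∨⟩ = Σ_i a_i k_i for β = Σ_i k_i α_i,
where P_θ = Σ_i a_i Λ_i (since ⟨Λ_i, α_j^∨⟩ = δ_{ij} and ⟨Λ_i, d⟩ = 0). -/
noncomputable def pairP (m l : ℕ) (θ : Set (Cyl m l)) (β : Hw (m + l)) : ℚ :=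
  ∑ᶠ i, aC m l θ i * β.1 i

/-- D(P_θ) = {α ∈ R₊ : ⟨P_θ, α^∨⟩ = -1}. -/
def DSet (m l : ℕ) (θ : Set (Cyl m l)) : Set (Hw (m + l)) :=
  {β | β ∈ Rpos (m + l) ∧ pairP m l θ β = -1}

/-- The "inversion set" R(w_θ) = {hk(x) : x ∈ θ}. -/
def RwTheta (m l : ℕ) (θ : Set (Cyl m l)) : Set (Hw (m + l)) := hk m l θ '' θ

/-- The set Π_θ = Π_θ^0 ∪ Π_θ^arm ∪ Π_θ^leg. -/
def PiTheta (m l : ℕ) (θ : Set (Cyl m l)) : Set (Hw (m + l)) :=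
  {v | ∃ x, x ∈ btm m l θ ∧ x ∉ btmMax m l θ ∧ x ∉ btmMin m l θ ∧ v = alC m l x} ∪
  {v | ∃ x, x ∈ btmMax m l θ ∧ v = alC m l x + ∑ᶠ y ∈ armSet m l θ x, alC m l y} ∪
  {v | ∃ x, x ∈ btmMax m l θ ∧ v = alC m l x + ∑ᶠ y ∈ legSet m l θ x, alC m l y}

/-- The modified order ⊴ on R(w_θ): α ⊴ β iff β - α ∈ Σ_{γ∈Π_θ} ℤ≥0 γ. -/
def trile (m l : ℕ) (θ : Set (Cyl m l)) (α β : Hw (m + l)) : Prop :=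
  β - α ∈ AddSubmonoid.closure (PiTheta m l θ)

/-! ## Standard tableaux (encoded by the inverse enumeration e = T⁻¹ : ℤ≥1 → θ) -/

/-- A standard tableau on θ, given by the enumeration e = T⁻¹ : {1,2,…} → θ.
This is precisely the data of an order-preserving bijection T : θ → ℤ≥1. -/
def IsTableau (m l : ℕ) (θ : Set (Cyl m l)) (e : ℕ → Cyl m l) : Prop :=
  Set.InjOn e {a : ℕ | 1 ≤ a} ∧ e '' {a : ℕ | 1 ≤ a} = θ ∧
  ∀ a b : ℕ, 1 ≤ a → 1 ≤ b → cle m l (e a) (e b) → e a ≠ e b → a < b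

/-- A standard tableau on a finite (skew) diagram ξ with |ξ| = n, encoded by
the enumeration e = S⁻¹ : {1,…,n} → ξ. -/
def IsTableauOn (m l : ℕ) (ξ : Set (Cyl m l)) (n : ℕ) (e : ℕ → Cyl m l) : Prop :=
  Set.InjOn e (Set.Icc 1 n) ∧ e '' Set.Icc 1 n = ξ ∧
  ∀ a b : ℕ, a ∈ Set.Icc 1 n → b ∈ Set.Icc 1 n → cle m l (e a) (e b) → e a ≠ e b → a < b

/-- The word (con(e 1), con(e 2), …, con(e n)). -/
def tabWord (m l : ℕ) (e : ℕ → Cyl m l) (n : ℕ) : List (ZMod (m + l)) :=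
  (List.range n).map (fun k => con m l (e (k + 1)))

/-- The semi-infinite Bruhat interval [e, w_{θ,T}) = ⋃_{n≥1} [e, w_{θ,T}[n]]. -/
def semiInt (m l : ℕ) (e : ℕ → Cyl m l) : Set (Hw (m + l) → Hw (m + l)) :=
  ⋃ n ∈ {n : ℕ | 1 ≤ n}, bint (m + l) (wordProd (m + l) (tabWord m l e n))

/-- w is P_θ-pluscule: ⟨P_θ, α^∨⟩ = -1 for every α ∈ R(w). -/
def Pluscule (m l : ℕ) (θ : Set (Cyl m l)) (w : Hw (m + l) → Hw (m + l)) : Prop :=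
  ∀ β ∈ invSet (m + l) w, pairP m l θ β = -1

/-- The generating relation of the heap order ⪯_T on ℤ≥1. -/
def heapRel (m l : ℕ) (e : ℕ → Cyl m l) (a b : ℕ) : Prop :=
  1 ≤ a ∧ a ≤ b ∧
    (con m l (e a) = con m l (e b) ∨
      sFun (m + l) (con m l (e a)) ∘ sFun (m + l) (con m l (e b)) ≠
        sFun (m + l) (con m l (e b)) ∘ sFun (m + l) (con m l (e a)))

/-- The generating relation of the heap order ≤^hp on R(w_θ):
α ≤ β whenever β - α ∈ Q₊ (the ordinary order) and ⟨α, β^∨⟩ ≠ 0. -/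
def hpRel (m l : ℕ) (θ : Set (Cyl m l)) (α β : Hw (m + l)) : Prop :=
  α ∈ RwTheta m l θ ∧ β ∈ RwTheta m l θ ∧ β - α ∈ QPos (m + l) ∧
    pairCo (m + l) α β ≠ 0

/-- v is the Weyl group element w_ξ of a proper order ideal ξ of θ. -/
def IsIdealWord (m l : ℕ) (θ ξ : Set (Cyl m l)) (v : Hw (m + l) → Hw (m + l)) : Prop :=
  IsProperIdealOf m l θ ξ ∧
    ∃ n e, IsTableauOn m l ξ n e ∧ v = wordProd (m + l) (tabWord m l e n)

/-- A proper order ideal of the poset (R(w_θ), ⊴). -/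
def IsProperIdealOfRw (m l : ℕ) (θ : Set (Cyl m l)) (J : Set (Hw (m + l))) : Prop :=
  J ⊆ RwTheta m l θ ∧ J ≠ RwTheta m l θ ∧
    ∀ β ∈ J, ∀ α ∈ RwTheta m l θ, trile m l θ α β → α ∈ J


/-! ### Linear structure of the reflection representation -/

section Coxeter

variable {κ : ℕ} [NeZero κ]

set_option linter.unusedSectionVars false

lemma pairSimple_eq_sum (ζ : Hw κ) (i : ZMod κ) :
    pairSimple κ ζ i = (∑ j, ζ.1 j * cartan κ i j) + ζ.2 * (if i = 0 then 1 else 0) := by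
  rw [pairSimple, finsum_eq_sum_of_fintype]

lemma pairCo_eq_sum (ζ β : Hw κ) : pairCo κ ζ β = ∑ i, β.1 i * pairSimple κ ζ i := by
  rw [pairCo, finsum_eq_sum_of_fintype]

lemma cartan_symm (i j : ZMod κ) : cartan κ i j = cartan κ j i := by
  have h1 : (i - j = 1) ↔ (j - i = -1) := by rw [← neg_sub j i, neg_eq_iff_eq_neg]
  have h2 : (i - j = -1) ↔ (j - i = 1) := by rw [← neg_sub j i, neg_inj]
  simp only [cartan, h1, h2, eq_comm (a := i) (b := j)]
  ring

lemma one_ne_zero_zmod (hκ : 2 ≤ κ) : (1 : ZMod κ) ≠ 0 := by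
  have : Fact (1 < κ) := ⟨by omega⟩
  exact one_ne_zero

lemma cartan_self (hκ : 2 ≤ κ) (i : ZMod κ) : cartan κ i i = 2 := by
  have h := one_ne_zero_zmod hκ
  have h1 : ¬ ((0 : ZMod κ) = 1) := fun h' => h h'.symm
  have h2 : ¬ ((0 : ZMod κ) = -1) := fun h' => h (by rw [eq_comm, neg_eq_zero] at h'; exact h')
  simp [cartan, h1, h]

lemma cartan_nonpos {i j : ZMod κ} (hij : i ≠ j) : cartan κ i j ≤ 0 := by
  simp only [cartan, if_neg hij]
  split_ifs <;> norm_num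

/-- The Cartan matrix entry vanishes only where a commutation move is allowed. -/
lemma comm_of_cartan_eq_zero {i j : ZMod κ} (hij : i ≠ j) (h : cartan κ i j = 0) :
    i - j ≠ 0 ∧ i - j ≠ 1 ∧ i - j ≠ -1 := by
  refine ⟨sub_ne_zero.mpr hij, ?_, ?_⟩ <;> intro h' <;>
    simp only [cartan, if_neg hij, if_pos h'] at h <;> split_ifs at h <;> norm_num at h

/-- `⟨·, α_i^∨⟩` as a linear form. -/
noncomputable def pairL (i : ZMod κ) : Hw κ →ₗ[ℚ] ℚ where
  toFun ζ := pairSimple κ ζ i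
  map_add' x y := by
    simp only [pairSimple_eq_sum, Prod.fst_add, Prod.snd_add, Pi.add_apply, add_mul,
      Finset.sum_add_distrib]
    ring
  map_smul' c x := by
    simp only [pairSimple_eq_sum, Prod.smul_fst, Prod.smul_snd, Pi.smul_apply, smul_eq_mul,
      RingHom.id_apply, mul_add, Finset.mul_sum, mul_assoc]

/-- The simple reflection `s_i` as a linear map. -/
noncomputable def sL (i : ZMod κ) : Hw κ →ₗ[ℚ] Hw κ :=
  LinearMap.id - (pairL i).smulRight (alphaR κ i)

lemma sL_apply (i : ZMod κ) (ζ : Hw κ) : sL i ζ = sFun κ i ζ := rfl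

lemma pairL_apply (i : ZMod κ) (ζ : Hw κ) : pairL i ζ = pairSimple κ ζ i := rfl

lemma pairSimple_alpha (i j : ZMod κ) : pairSimple κ (alphaR κ j) i = cartan κ i j := by
  rw [pairSimple_eq_sum]
  simp [alphaR, Pi.single_apply]

lemma sFun_snd (i : ZMod κ) (ζ : Hw κ) : (sFun κ i ζ).2 = ζ.2 := by
  simp [sFun, alphaR]

lemma sFun_fst (i j : ZMod κ) (ζ : Hw κ) :
    (sFun κ i ζ).1 j = ζ.1 j - if j = i then pairSimple κ ζ i else 0 := by
  simp [sFun, alphaR, Pi.single_apply]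

lemma sFun_neg (i : ZMod κ) (ζ : Hw κ) : sFun κ i (-ζ) = -sFun κ i ζ := by
  simp only [← sL_apply, map_neg]

lemma sFun_alpha_self (hκ : 2 ≤ κ) (i : ZMod κ) :
    sFun κ i (alphaR κ i) = -alphaR κ i := by
  rw [sFun, pairSimple_alpha, cartan_self hκ, two_smul]
  abel

lemma sFun_sFun (hκ : 2 ≤ κ) (i : ZMod κ) (ζ : Hw κ) : sFun κ i (sFun κ i ζ) = ζ := by
  have h : sL i (ζ - pairSimple κ ζ i • alphaR κ i) = ζ := by
    rw [map_sub, map_smul, sL_apply, sL_apply, sFun_alpha_self hκ, sFun]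
    simp
  exact h

lemma wordProd_nil (x : Hw κ) : wordProd κ [] x = x := rfl

lemma wordProd_cons (i : ZMod κ) (L : List (ZMod κ)) (x : Hw κ) :
    wordProd κ (i :: L) x = sFun κ i (wordProd κ L x) := rfl

lemma wordProd_append (L M : List (ZMod κ)) (x : Hw κ) :
    wordProd κ (L ++ M) x = wordProd κ L (wordProd κ M x) := by
  induction L with
  | nil => rfl
  | cons i L ih => simp only [List.cons_append, wordProd_cons, ih]

/-- The linear map underlying a word. -/
noncomputable def wordL (L : List (ZMod κ)) : Hw κ →ₗ[ℚ] Hw κ :=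
  (L.map sL).foldr (· ∘ₗ ·) LinearMap.id

lemma wordL_apply (L : List (ZMod κ)) (x : Hw κ) : wordL L x = wordProd κ L x := by
  induction L with
  | nil => rfl
  | cons i L ih => rw [wordProd_cons, ← ih]; rfl

lemma wordProd_neg (L : List (ZMod κ)) (x : Hw κ) : wordProd κ L (-x) = -wordProd κ L x := by
  simp only [← wordL_apply, map_neg]

lemma wordProd_reverse (hκ : 2 ≤ κ) (L : List (ZMod κ)) (x : Hw κ) :
    wordProd κ L (wordProd κ L.reverse x) = x := by
  induction L generalizing x with
  | nil => rfl
  | cons i L ih =>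
    rw [wordProd_cons, List.reverse_cons, wordProd_append, ih, wordProd_cons, wordProd_nil,
      sFun_sFun hκ]

/-! ### The invariant pairing -/

lemma pairCo_alpha_right (ζ : Hw κ) (i : ZMod κ) :
    pairCo κ ζ (alphaR κ i) = pairSimple κ ζ i := by
  rw [pairCo_eq_sum]
  simp [alphaR, Pi.single_apply]

lemma pairCo_alpha_left (β : Hw κ) (hβ : β.2 = 0) (i : ZMod κ) :
    pairCo κ (alphaR κ i) β = pairSimple κ β i := by
  rw [pairCo_eq_sum, pairSimple_eq_sum, hβ]
  simp only [pairSimple_alpha, zero_mul, add_zero]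
  exact Finset.sum_congr rfl fun j _ => by rw [cartan_symm]

lemma pairCo_sub_smul_left (ζ η β : Hw κ) (c : ℚ) :
    pairCo κ (ζ - c • η) β = pairCo κ ζ β - c * pairCo κ η β := by
  simp only [pairCo_eq_sum, ← pairL_apply, map_sub, map_smul, smul_eq_mul, mul_sub,
    Finset.sum_sub_distrib, Finset.mul_sum]
  congr 1
  exact Finset.sum_congr rfl fun j _ => by ring

lemma pairCo_sub_smul_right (ζ η β : Hw κ) (c : ℚ) :
    pairCo κ ζ (β - c • η) = pairCo κ ζ β - c * pairCo κ ζ η := by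
  simp only [pairCo_eq_sum, Prod.fst_sub, Prod.smul_fst, Pi.sub_apply, Pi.smul_apply,
    smul_eq_mul, sub_mul, Finset.sum_sub_distrib, Finset.mul_sum, mul_assoc]

/-- `s_i` is self-adjoint for the pairing between `h*` and the coroots. -/
lemma pairCo_sFun (ζ β : Hw κ) (hβ : β.2 = 0) (i : ZMod κ) :
    pairCo κ (sFun κ i ζ) β = pairCo κ ζ (sFun κ i β) := by
  rw [sFun, sFun, pairCo_sub_smul_left, pairCo_sub_smul_right, pairCo_alpha_left β hβ,
    pairCo_alpha_right]
  ring

/-- The quadratic form is a sum of squares of cyclic differences. -/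
lemma pairCo_self (β : Hw κ) (hβ : β.2 = 0) :
    pairCo κ β β = ∑ i, (β.1 i - β.1 (i + 1)) ^ 2 := by
  have hp : ∀ i, pairSimple κ β i = 2 * β.1 i - β.1 (i - 1) - β.1 (i + 1) := by
    intro i
    have e1 : ∀ j, (i - j = 1) ↔ (j = i - 1) := fun j =>
      ⟨fun h => by rw [← h]; ring, fun h => by rw [h]; ring⟩
    have e2 : ∀ j, (i - j = -1) ↔ (j = i + 1) := fun j =>
      ⟨fun h => by linear_combination -h, fun h => by rw [h]; ring⟩
    rw [pairSimple_eq_sum, hβ, zero_mul, add_zero]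
    simp only [cartan, e1, e2, mul_add, Finset.sum_add_distrib, mul_ite, mul_zero,
      Finset.sum_ite_eq, Finset.sum_ite_eq', Finset.mem_univ, if_true]
    ring
  have s1 : ∑ i, β.1 i * β.1 (i - 1) = ∑ i, β.1 (i + 1) * β.1 i := by
    rw [← Equiv.sum_comp (Equiv.addRight (1 : ZMod κ))]
    simp
  have s2 : ∑ i, β.1 (i + 1) ^ 2 = ∑ i, β.1 i ^ 2 :=
    Equiv.sum_comp (Equiv.addRight (1 : ZMod κ)) (fun i => β.1 i ^ 2)
  have l1 : ∑ i, β.1 i * (2 * β.1 i - β.1 (i - 1) - β.1 (i + 1))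
      = 2 * ∑ i, β.1 i ^ 2 - ∑ i, β.1 i * β.1 (i - 1) - ∑ i, β.1 (i + 1) * β.1 i := by
    rw [Finset.mul_sum, ← Finset.sum_sub_distrib, ← Finset.sum_sub_distrib]
    exact Finset.sum_congr rfl fun i _ => by ring
  have l2 : ∑ i, (β.1 i - β.1 (i + 1)) ^ 2
      = ∑ i, β.1 i ^ 2 + ∑ i, β.1 (i + 1) ^ 2 - 2 * ∑ i, β.1 (i + 1) * β.1 i := by
    rw [Finset.mul_sum, ← Finset.sum_add_distrib, ← Finset.sum_sub_distrib]
    exact Finset.sum_congr rfl fun i _ => by ring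
  rw [pairCo_eq_sum, l2, s2]
  simp only [hp]
  rw [l1, s1]
  ring

/-! ### Real roots are positive or negative -/

/-- On integer vectors on the cycle, the form takes even values and vanishes only at constants. -/
lemma two_le_cyc {f : ZMod κ → ℤ} {p q : ZMod κ} (hpq : f p ≠ f q) :
    2 ≤ ∑ i, (f i - f (i + 1)) ^ 2 := by
  have hnn : 0 ≤ ∑ i, (f i - f (i + 1)) ^ 2 := Finset.sum_nonneg fun i _ => sq_nonneg _
  have hne : ∑ i, (f i - f (i + 1)) ^ 2 ≠ 0 := by
    intro h0
    rw [Finset.sum_eq_zero_iff_of_nonneg fun i _ => sq_nonneg _] at h0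
    have hs : ∀ i, f (i + 1) = f i := fun i => by
      have := h0 i (Finset.mem_univ _)
      have := pow_eq_zero_iff (two_ne_zero) |>.mp this
      omega
    have hc : ∀ k : ℕ, f (k : ZMod κ) = f 0 := by
      intro k
      induction k with
      | zero => simp
      | succ k ih => rw [Nat.cast_succ, hs, ih]
    apply hpq
    rw [← ZMod.natCast_zmod_val p, ← ZMod.natCast_zmod_val q, hc, hc]
  have hev : Even (∑ i, (f i - f (i + 1)) ^ 2) := by
    have h0 : ∑ i, (f i - f (i + 1)) = 0 := by
      have hshift : ∑ i, f (i + 1) = ∑ i, f i :=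
        Equiv.sum_comp (Equiv.addRight (1 : ZMod κ)) (fun i => f i)
      rw [Finset.sum_sub_distrib, hshift, sub_self]
    have : Even (∑ i, ((f i - f (i + 1)) ^ 2 - (f i - f (i + 1)))) := by
      apply Finset.even_sum
      intro i _
      have h1 := Int.even_mul_pred_self (f i - f (i + 1))
      rwa [mul_sub, mul_one, ← sq] at h1
    rwa [Finset.sum_sub_distrib, h0, sub_zero] at this
  obtain ⟨r, hr⟩ := hev
  omega

/-- An integer vector of norm two cannot take both signs: the norm is at least the sum of the norms
of its positive and negative parts, and each of these would be at least two. -/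
lemma sign_of_norm_two {f : ZMod κ → ℤ} (hf : ∑ i, (f i - f (i + 1)) ^ 2 = 2) :
    (∀ i, 0 ≤ f i) ∨ (∀ i, f i ≤ 0) := by
  by_contra! h
  obtain ⟨⟨q, hq⟩, ⟨p, hp⟩⟩ := h
  have h1 := two_le_cyc (f := fun i => max (f i) 0) (p := p) (q := q) (by omega)
  have h2 := two_le_cyc (f := fun i => max (-f i) 0) (p := p) (q := q) (by omega)
  have h3 : ∑ i, (max (f i) 0 - max (f (i + 1)) 0) ^ 2
      + ∑ i, (max (-f i) 0 - max (-f (i + 1)) 0) ^ 2 ≤ ∑ i, (f i - f (i + 1)) ^ 2 := by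
    rw [← Finset.sum_add_distrib]
    refine Finset.sum_le_sum fun i _ => ?_
    generalize f i = x
    generalize f (i + 1) = y
    rcases le_total x 0 with hx | hx <;> rcases le_total y 0 with hy | hy <;>
      simp only [max_eq_left, max_eq_right, hx, hy, neg_nonneg.mpr, neg_nonpos.mpr] <;>
      nlinarith
  omega

/-- Integral vectors of the root lattice of norm two; this contains the real roots. -/
structure IsNormTwo (β : Hw κ) : Prop where
  snd : β.2 = 0
  int : ∃ f : ZMod κ → ℤ, ∀ i, β.1 i = f i
  norm : pairCo κ β β = 2

lemma isNormTwo_alpha (hκ : 2 ≤ κ) (i : ZMod κ) : IsNormTwo (alphaR κ i) where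
  snd := rfl
  int := ⟨Pi.single i 1, fun j => by simp [alphaR, Pi.single_apply]⟩
  norm := by rw [pairCo_alpha_right, pairSimple_alpha, cartan_self hκ]

lemma cartan_int (i j : ZMod κ) : ∃ c : ℤ, cartan κ i j = c :=
  ⟨(if i = j then 2 else 0) + (if i - j = 1 then -1 else 0) + (if i - j = -1 then -1 else 0), by
    simp [cartan]⟩

lemma IsNormTwo.sFun (hκ : 2 ≤ κ) {β : Hw κ} (h : IsNormTwo β) (i : ZMod κ) :
    IsNormTwo (sFun κ i β) where
  snd := by rw [sFun_snd, h.snd]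
  int := by
    obtain ⟨f, hf⟩ := h.int
    choose c hc using cartan_int i
    refine ⟨fun j => f j - if j = i then ∑ k, f k * c k else 0, fun j => ?_⟩
    rw [sFun_fst, pairSimple_eq_sum, h.snd]
    simp only [hf, hc]
    split_ifs <;> push_cast <;> ring
  norm := by
    rw [pairCo_sFun _ _ (by rw [sFun_snd, h.snd]), sFun_sFun hκ, h.norm]

lemma alpha_mem_Rset (i : ZMod κ) : alphaR κ i ∈ Rset κ := ⟨[], i, rfl⟩

lemma wordProd_mem_Rset {β : Hw κ} (h : β ∈ Rset κ) (L : List (ZMod κ)) :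
    wordProd κ L β ∈ Rset κ := by
  obtain ⟨M, i, rfl⟩ := h
  exact ⟨L ++ M, i, (wordProd_append _ _ _).symm⟩

lemma sFun_mem_Rset {β : Hw κ} (h : β ∈ Rset κ) (i : ZMod κ) : sFun κ i β ∈ Rset κ :=
  wordProd_mem_Rset h [i]

lemma neg_mem_Rset (hκ : 2 ≤ κ) {β : Hw κ} (h : β ∈ Rset κ) : -β ∈ Rset κ := by
  obtain ⟨M, i, rfl⟩ := h
  refine ⟨M ++ [i], i, ?_⟩
  rw [wordProd_append, wordProd_cons, wordProd_nil, sFun_alpha_self hκ, wordProd_neg]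

lemma isNormTwo_of_mem (hκ : 2 ≤ κ) {β : Hw κ} (h : β ∈ Rset κ) : IsNormTwo β := by
  obtain ⟨M, i, rfl⟩ := h
  induction M with
  | nil => exact isNormTwo_alpha hκ i
  | cons j M ih => exact ih.sFun hκ j

lemma mem_Rneg_iff {β : Hw κ} : β ∈ Rneg κ ↔ -β ∈ Rpos κ := Iff.rfl

lemma pos_or_neg (hκ : 2 ≤ κ) {β : Hw κ} (h : β ∈ Rset κ) : β ∈ Rpos κ ∨ β ∈ Rneg κ := by
  have hn := isNormTwo_of_mem hκ h
  obtain ⟨f, hf⟩ := hn.int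
  have hsum : ∑ i, (f i - f (i + 1)) ^ 2 = 2 := by
    have := hn.norm
    rw [pairCo_self _ hn.snd] at this
    simp only [hf] at this
    exact_mod_cast this
  rcases sign_of_norm_two hsum with hs | hs
  · refine Or.inl ⟨h, hn.snd, fun i => ⟨(f i).toNat, ?_⟩⟩
    rw [hf, ← Int.cast_natCast, Int.toNat_of_nonneg (hs i)]
  · refine Or.inr ⟨neg_mem_Rset hκ h, by simp [hn.snd], fun i => ⟨(-f i).toNat, ?_⟩⟩
    rw [← Int.cast_natCast, Int.toNat_of_nonneg (by have := hs i; omega)]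
    simp [hf]

lemma nonneg_of_Rpos {β : Hw κ} (h : β ∈ Rpos κ) (i : ZMod κ) : 0 ≤ β.1 i := by
  obtain ⟨n, hn⟩ := h.2.2 i
  rw [hn]
  positivity

lemma nonpos_of_Rneg {β : Hw κ} (h : β ∈ Rneg κ) (i : ZMod κ) : β.1 i ≤ 0 := by
  have := nonneg_of_Rpos (mem_Rneg_iff.mp h) i
  simp only [Prod.fst_neg, Pi.neg_apply] at this
  linarith

/-- A real root whose coefficients are all nonpositive is not a positive root. -/
lemma not_Rpos_of_nonpos (hκ : 2 ≤ κ) {β : Hw κ} (h : ∀ i, β.1 i ≤ 0) : β ∉ Rpos κ := by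
  intro hp
  have h0 : ∀ i, β.1 i = 0 := fun i => le_antisymm (h i) (nonneg_of_Rpos hp i)
  have := (isNormTwo_of_mem hκ hp.1).norm
  rw [pairCo_eq_sum] at this
  simp [h0] at this

lemma alpha_mem_Rpos (i : ZMod κ) : alphaR κ i ∈ Rpos κ :=
  ⟨alpha_mem_Rset i, rfl, fun j => ⟨if j = i then 1 else 0, by simp [alphaR, Pi.single_apply]⟩⟩

/-- `α_i` is the only positive root that `s_i` makes negative. -/
lemma eq_alpha_of_sFun_neg (hκ : 2 ≤ κ) {β : Hw κ} {i : ZMod κ} (h : β ∈ Rpos κ)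
    (h' : sFun κ i β ∈ Rneg κ) : β = alphaR κ i := by
  have hn := isNormTwo_of_mem hκ h.1
  have h0 : ∀ j, j ≠ i → β.1 j = 0 := by
    intro j hj
    have h1 := nonpos_of_Rneg h' j
    rw [sFun_fst, if_neg hj, sub_zero] at h1
    exact le_antisymm h1 (nonneg_of_Rpos h j)
  have hβ : β = β.1 i • alphaR κ i := by
    refine Prod.ext (funext fun j => ?_) (by simp [hn.snd, alphaR])
    by_cases hj : j = i
    · subst hj; simp [alphaR]
    · simp [alphaR, hj, h0 j hj]
  have h2 : β.1 i * (β.1 i * 2) = 2 := by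
    have := hn.norm
    have e : pairSimple κ β i = β.1 i * 2 := by
      conv_lhs => rw [hβ]
      rw [← pairL_apply, map_smul, pairL_apply, pairSimple_alpha, cartan_self hκ, smul_eq_mul]
    rw [pairCo_eq_sum, Finset.sum_eq_single i (fun j _ hj => by rw [h0 j hj, zero_mul])
      (fun h => absurd (Finset.mem_univ _) h), e] at this
    exact this
  have h3 : β.1 i = 1 := by
    have := nonneg_of_Rpos h i
    nlinarith
  rw [hβ, h3, one_smul]

/-! ### Inversion sets and deletion -/

lemma invSet_cons (hκ : 2 ≤ κ) {i : ZMod κ} {L : List (ZMod κ)} {β : Hw κ}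
    (h : β ∈ invSet κ (wordProd κ (i :: L))) :
    β = alphaR κ i ∨ sFun κ i β ∈ invSet κ (wordProd κ L) := by
  obtain ⟨hp, γ, hγ, hw⟩ := h
  rw [wordProd_cons] at hw
  rcases pos_or_neg hκ (sFun_mem_Rset hp.1 i) with h1 | h1
  · refine Or.inr ⟨h1, γ, hγ, ?_⟩
    rw [← hw, sFun_sFun hκ]
  · exact Or.inl (eq_alpha_of_sFun_neg hκ hp h1)

/-- The strong exchange property: an inversion `β` of a word is the root of a reflection
that multiplies the word into one with a letter deleted. -/
lemma deletion (hκ : 2 ≤ κ) (L : List (ZMod κ)) {β : Hw κ}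
    (h : β ∈ invSet κ (wordProd κ L)) :
    ∃ M : List (ZMod κ), M.length + 1 = L.length ∧
      ∀ x, wordProd κ M x - pairCo κ (wordProd κ M x) β • β = wordProd κ L x := by
  induction L generalizing β with
  | nil =>
    obtain ⟨hp, γ, hγ, rfl⟩ := h
    exact absurd hp (not_Rpos_of_nonpos hκ (nonpos_of_Rneg hγ))
  | cons i L ih =>
    rcases invSet_cons hκ h with rfl | h1
    · refine ⟨L, rfl, fun x => ?_⟩
      rw [pairCo_alpha_right, wordProd_cons, sFun]
    · obtain ⟨M, hM, hx⟩ := ih h1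
      refine ⟨i :: M, by simp [hM], fun x => ?_⟩
      rw [wordProd_cons, wordProd_cons, ← hx x, pairCo_sFun _ _ h.1.2.1]
      rw [← sL_apply i (_ - _), map_sub, map_smul, sL_apply, sL_apply, sFun_sFun hκ]

lemma deletion_simple (hκ : 2 ≤ κ) {L : List (ZMod κ)} {j : ZMod κ}
    (h : alphaR κ j ∈ invSet κ (wordProd κ L)) :
    ∃ M : List (ZMod κ), M.length + 1 = L.length ∧ wordProd κ (j :: M) = wordProd κ L := by
  obtain ⟨M, hM, hx⟩ := deletion hκ L h
  refine ⟨M, hM, funext fun x => ?_⟩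
  rw [← hx x, pairCo_alpha_right, wordProd_cons, sFun]

lemma len_le (L : List (ZMod κ)) : len κ (wordProd κ L) ≤ L.length :=
  Nat.sInf_le ⟨L, rfl, rfl⟩

lemma reduced_iff (L : List (ZMod κ)) :
    IsReducedWord κ L ↔ ∀ M, wordProd κ M = wordProd κ L → L.length ≤ M.length := by
  constructor
  · intro h M hM
    rw [← h, ← hM]
    exact len_le M
  · intro h
    refine le_antisymm (len_le L) ?_
    refine le_csInf ⟨_, L, rfl, rfl⟩ ?_
    rintro r ⟨M, rfl, hM⟩
    exact h M hM

lemma wordProd_cons_congr {L M : List (ZMod κ)} (i : ZMod κ)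
    (h : wordProd κ L = wordProd κ M) : wordProd κ (i :: L) = wordProd κ (i :: M) := by
  funext x
  rw [wordProd_cons, wordProd_cons, h]

lemma wordProd_cons_cancel (hκ : 2 ≤ κ) {L M : List (ZMod κ)} {i : ZMod κ}
    (h : wordProd κ (i :: L) = wordProd κ (i :: M)) : wordProd κ L = wordProd κ M := by
  funext x
  have := congrArg (sFun κ i) (congrFun h x)
  rwa [wordProd_cons, wordProd_cons, sFun_sFun hκ, sFun_sFun hκ] at this

lemma reduced_tail {i : ZMod κ} {L : List (ZMod κ)} (h : IsReducedWord κ (i :: L)) :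
    IsReducedWord κ L := by
  rw [reduced_iff] at h ⊢
  intro M hM
  simpa using h (i :: M) (wordProd_cons_congr i hM)

lemma reduced_congr {L M : List (ZMod κ)} (h : IsReducedWord κ L)
    (hw : wordProd κ M = wordProd κ L) (hl : M.length = L.length) : IsReducedWord κ M := by
  rw [IsReducedWord, hw, h, hl]

/-- The first letter of a reduced word is an inversion. -/
lemma head_mem_invSet (hκ : 2 ≤ κ) {i : ZMod κ} {L : List (ZMod κ)}
    (h : IsReducedWord κ (i :: L)) : alphaR κ i ∈ invSet κ (wordProd κ (i :: L)) := by
  have hγ := wordProd_reverse hκ (i :: L) (alphaR κ i)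
  have hr := wordProd_mem_Rset (alpha_mem_Rset i) (i :: L).reverse
  generalize wordProd κ (i :: L).reverse (alphaR κ i) = γ at hγ hr
  rcases pos_or_neg hκ hr with h1 | h1
  · exfalso
    have h2 : alphaR κ i ∈ invSet κ (wordProd κ L) := by
      refine ⟨alpha_mem_Rpos i, -γ, by rwa [mem_Rneg_iff, neg_neg], ?_⟩
      rw [wordProd_neg, neg_eq_iff_eq_neg, ← sFun_alpha_self hκ, ← hγ, wordProd_cons,
        sFun_sFun hκ]
    obtain ⟨M, hM, hw⟩ := deletion_simple hκ h2
    have h3 : wordProd κ M = wordProd κ (i :: L) := by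
      funext x
      rw [wordProd_cons, ← hw, wordProd_cons, sFun_sFun hκ]
    have := (reduced_iff _).mp h M h3
    simp at this
    omega
  · exact ⟨alpha_mem_Rpos i, γ, h1, hγ⟩

/-! ### Minuscule functionals force full commutativity -/

lemma CommMove.cons {L M : List (ZMod κ)} (i : ZMod κ) (h : CommMove κ L M) :
    CommMove κ (i :: L) (i :: M) := by
  obtain ⟨u, v, a, b, h1, h2, h3, rfl, rfl⟩ := h
  exact ⟨i :: u, v, a, b, h1, h2, h3, rfl, rfl⟩

lemma rtg_cons {L M : List (ZMod κ)} (i : ZMod κ)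
    (h : Relation.ReflTransGen (CommMove κ) L M) :
    Relation.ReflTransGen (CommMove κ) (i :: L) (i :: M) :=
  h.lift (fun L => i :: L) fun _ _ => CommMove.cons i

/-- If `i :: L` is reduced, then `s_i` maps inversions of `L` to inversions of `i :: L`. -/
lemma sFun_mem_invSet (hκ : 2 ≤ κ) {i : ZMod κ} {L : List (ZMod κ)}
    (h : IsReducedWord κ (i :: L)) {β : Hw κ} (hβ : β ∈ invSet κ (wordProd κ L)) :
    sFun κ i β ∈ invSet κ (wordProd κ (i :: L)) := by
  obtain ⟨hp, γ, hγ, hw⟩ := hβ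
  rcases pos_or_neg hκ (sFun_mem_Rset hp.1 i) with h1 | h1
  · exact ⟨h1, γ, hγ, by rw [wordProd_cons, hw]⟩
  · exfalso
    obtain rfl := eq_alpha_of_sFun_neg hκ hp h1
    obtain ⟨M, hM, hw'⟩ := deletion_simple hκ ⟨hp, γ, hγ, hw⟩
    have h3 : wordProd κ M = wordProd κ (i :: L) := by
      funext x
      rw [wordProd_cons, ← hw', wordProd_cons, sFun_sFun hκ]
    have := (reduced_iff _).mp h M h3
    simp at this
    omega

/-- If a linear form is `-1` on all inversions of `w`, two simple roots that are both inversions of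
`w` are orthogonal: otherwise `s_i α_j` would be an inversion with value less than `-1`. -/
lemma cartan_eq_zero_of_inv (hκ : 2 ≤ κ) (p : Hw κ →ₗ[ℚ] ℚ) {L : List (ZMod κ)} {i j : ZMod κ}
    (hp : ∀ β ∈ invSet κ (wordProd κ L), p β = -1) (hij : i ≠ j)
    (hi : alphaR κ i ∈ invSet κ (wordProd κ L)) (hj : alphaR κ j ∈ invSet κ (wordProd κ L)) :
    cartan κ i j = 0 := by
  have hc := cartan_nonpos hij
  have hpi := hp _ hi
  have hpj := hp _ hj
  have hs : sFun κ i (alphaR κ j) = alphaR κ j - cartan κ i j • alphaR κ i := by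
    rw [sFun, pairSimple_alpha]
  suffices h : sFun κ i (alphaR κ j) ∈ invSet κ (wordProd κ L) by
    have := hp _ h
    rw [hs, map_sub, map_smul, hpi, hpj, smul_eq_mul] at this
    linarith
  obtain ⟨-, γi, hγi, hwi⟩ := hi
  obtain ⟨-, γj, hγj, hwj⟩ := hj
  have hr : sFun κ i (alphaR κ j) ∈ Rset κ := sFun_mem_Rset (alpha_mem_Rset j) i
  have hw : wordProd κ L (γj - cartan κ i j • γi) = sFun κ i (alphaR κ j) := by
    rw [hs, ← hwi, ← hwj]
    simp only [← wordL_apply, map_sub, map_smul]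
  have hrγ : γj - cartan κ i j • γi ∈ Rset κ := by
    have h1 := wordProd_mem_Rset hr L.reverse
    have h2 := wordProd_reverse hκ L.reverse (γj - cartan κ i j • γi)
    rw [List.reverse_reverse, hw] at h2
    rwa [h2] at h1
  refine ⟨(pos_or_neg hκ hr).resolve_right fun hn => ?_, _,
    (pos_or_neg hκ hrγ).resolve_left (not_Rpos_of_nonpos hκ fun k => ?_), hw⟩
  · have := nonpos_of_Rneg hn j
    rw [sFun_fst, if_neg hij.symm] at this
    simp [alphaR] at this
    linarith
  · have h1 := nonpos_of_Rneg hγi k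
    have h2 := nonpos_of_Rneg hγj k
    simp only [Prod.fst_sub, Prod.smul_fst, Pi.sub_apply, Pi.smul_apply, smul_eq_mul]
    nlinarith

lemma sFun_comm {i j : ZMod κ} (h : cartan κ i j = 0) (x : Hw κ) :
    sFun κ i (sFun κ j x) = sFun κ j (sFun κ i x) := by
  have h' : cartan κ j i = 0 := by rw [cartan_symm, h]
  have e : ∀ a b : ZMod κ, cartan κ a b = 0 →
      sFun κ a (sFun κ b x) = x - pairSimple κ x b • alphaR κ b - pairSimple κ x a • alphaR κ a := by
    intro a b hab
    have : pairSimple κ (x - pairSimple κ x b • alphaR κ b) a = pairSimple κ x a := by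
      rw [← pairL_apply, map_sub, map_smul, pairL_apply, pairL_apply, pairSimple_alpha, hab]
      simp
    rw [sFun, sFun, this]
  rw [e i j h, e j i h']
  abel

/-- Two reduced words of an element `w` on whose inversions some linear form is constantly `-1`
are commutation equivalent. -/
lemma fullyComm_aux (hκ : 2 ≤ κ) (n : ℕ) : ∀ (p : Hw κ →ₗ[ℚ] ℚ) (L1 L2 : List (ZMod κ)),
    L1.length = n → L2.length = n → IsReducedWord κ L1 → wordProd κ L2 = wordProd κ L1 →
    (∀ β ∈ invSet κ (wordProd κ L1), p β = -1) →
    Relation.ReflTransGen (CommMove κ) L1 L2 := by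
  induction n with
  | zero =>
    intro p L1 L2 h1 h2 _ _ _
    rw [List.length_eq_zero_iff] at h1 h2
    subst h1 h2
    exact .refl
  | succ n ih =>
    intro p L1 L2 h1 h2 hr hw hp
    obtain ⟨i, L1, rfl⟩ := List.exists_cons_of_length_eq_add_one h1
    obtain ⟨j, L2, rfl⟩ := List.exists_cons_of_length_eq_add_one h2
    simp only [List.length_cons, Nat.add_right_cancel_iff] at h1 h2
    have hr2 : IsReducedWord κ (j :: L2) := reduced_congr hr hw (by simp [h1, h2])
    have hp1 : ∀ β ∈ invSet κ (wordProd κ L1), (p ∘ₗ sL i) β = -1 := fun β hβ =>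
      hp _ (sFun_mem_invSet hκ hr hβ)
    have hp2 : ∀ β ∈ invSet κ (wordProd κ L2), (p ∘ₗ sL j) β = -1 := fun β hβ =>
      hp _ (hw ▸ sFun_mem_invSet hκ hr2 hβ)
    by_cases hij : i = j
    · subst hij
      exact rtg_cons i (ih _ L1 L2 h1 h2 (reduced_tail hr) (wordProd_cons_cancel hκ hw) hp1)
    have hi := head_mem_invSet hκ hr
    have hj := head_mem_invSet hκ hr2
    rw [hw] at hj
    have hc := cartan_eq_zero_of_inv hκ p hp hij hi hj
    obtain ⟨c1, c2, c3⟩ := comm_of_cartan_eq_zero hij hc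
    have hsj : sFun κ i (alphaR κ j) = alphaR κ j := by
      rw [sFun, pairSimple_alpha, hc, zero_smul, sub_zero]
    have hj1 : alphaR κ j ∈ invSet κ (wordProd κ L1) := by
      rcases invSet_cons hκ hj with h | h
      · exfalso
        have := congrFun (congrArg Prod.fst h) j
        simp [alphaR, Ne.symm hij] at this
      · rwa [hsj] at h
    -- `w = s_i s_j M = s_j s_i M` links the two words.
    obtain ⟨M, hM, hMw⟩ := deletion_simple hκ hj1
    have hw2 : wordProd κ L2 = wordProd κ (i :: M) := by
      apply wordProd_cons_cancel hκ (i := j)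
      rw [hw, ← wordProd_cons_congr i hMw]
      exact funext fun x => sFun_comm hc _
    have s1 := rtg_cons i (ih _ L1 (j :: M) h1 (by simp; omega) (reduced_tail hr) hMw hp1)
    have s2 : CommMove κ (i :: j :: M) (j :: i :: M) := ⟨[], M, i, j, c1, c2, c3, rfl, rfl⟩
    have s3 := rtg_cons j (ih _ (i :: M) L2 (by simp; omega) h2
      (reduced_congr (reduced_tail hr2) hw2.symm (by simp; omega)) hw2 (hw2 ▸ hp2))
    exact (s1.tail s2).trans s3

lemma fullyComm_of_minuscule (hκ : 2 ≤ κ) (p : Hw κ →ₗ[ℚ] ℚ) (w : Hw κ → Hw κ)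
    (hp : ∀ β ∈ invSet κ w, p β = -1) : FullyComm κ w := by
  rintro L1 L2 h1 rfl h2 hw
  refine fullyComm_aux hκ L1.length p L1 L2 rfl ?_ h1 hw hp
  rw [← h1, ← h2, hw]

end Coxeter

/-! ### The cylinder order in terms of translations -/

section Cylinder

variable {m l : ℕ}

lemma pr_mk_surjective (x : Cyl m l) : ∃ a : Z2, pr m l a = x :=
  QuotientAddGroup.mk'_surjective _ x

lemma pr_eq_zero_iff (a : Z2) : pr m l a = 0 ↔ ∃ k : ℤ, k • om m l = a := by
  rw [pr, QuotientAddGroup.mk'_apply, QuotientAddGroup.eq_zero_iff,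
    AddSubgroup.mem_zmultiples_iff]

/-- Nonzero vectors of the closed positive quadrant survive in the cylinder; this is where the two
coordinates of `ω` having opposite signs matters. -/
lemma pr_nonneg_eq_zero (hm : 1 ≤ m) (hl : 1 ≤ l) {p q : ℤ} (hp : 0 ≤ p) (hq : 0 ≤ q)
    (h : pr m l (p, q) = 0) : p = 0 ∧ q = 0 := by
  obtain ⟨k, hk⟩ := (pr_eq_zero_iff _).mp h
  simp only [om, Prod.smul_mk, smul_eq_mul, Prod.mk.injEq] at hk
  obtain ⟨h1, h2⟩ := hk
  have hm' : (1 : ℤ) ≤ m := by exact_mod_cast hm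
  have hl' : (1 : ℤ) ≤ l := by exact_mod_cast hl
  have hk0 : k = 0 := by
    apply le_antisymm
    · by_contra! hk
      nlinarith
    · by_contra! hk
      nlinarith
  subst hk0
  simp at h1 h2
  exact ⟨h1.symm, h2.symm⟩

lemma cle_iff (x y : Cyl m l) :
    cle m l x y ↔ ∃ p q : ℤ, 0 ≤ p ∧ 0 ≤ q ∧ x = y + pr m l (p, q) := by
  constructor
  · rintro ⟨a, b, rfl, rfl, h1, h2⟩
    refine ⟨a.1 - b.1, a.2 - b.2, by omega, by omega, ?_⟩
    rw [← map_add]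
    congr 1
    ext <;> simp
  · rintro ⟨p, q, hp, hq, rfl⟩
    obtain ⟨b, rfl⟩ := pr_mk_surjective y
    refine ⟨b + (p, q), b, map_add _ _ _, rfl, ?_, ?_⟩ <;> simp <;> omega

lemma con_pr (a : Z2) : con m l (pr m l a) = ((a.2 - a.1 : ℤ) : ZMod (m + l)) := rfl

/-- Each fibre of the content map is a single orbit of the diagonal translations. -/
lemma eq_add_diag_of_con_eq {x y : Cyl m l} (h : con m l x = con m l y) :
    ∃ k : ℤ, x = y + pr m l (k, k) := by
  obtain ⟨a, rfl⟩ := pr_mk_surjective x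
  obtain ⟨b, rfl⟩ := pr_mk_surjective y
  rw [con_pr, con_pr, ← sub_eq_zero, ← Int.cast_sub, ZMod.intCast_zmod_eq_zero_iff_dvd] at h
  obtain ⟨t, ht⟩ := h
  refine ⟨a.1 - b.1 + t * m, ?_⟩
  rw [← map_add, ← sub_eq_zero, ← map_sub, pr_eq_zero_iff]
  refine ⟨-t, ?_⟩
  push_cast at ht
  ext
  · simp [om]
    ring
  · simp [om]
    linarith

lemma con_surjective (i : ZMod (m + l)) : ∃ x : Cyl m l, con m l x = i := by
  obtain ⟨k, rfl⟩ := ZMod.intCast_surjective i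
  exact ⟨pr m l (0, k), by rw [con_pr]; simp⟩

/-- A filter of the cylinder is stable under decreasing the coordinates. -/
lemma mem_of_add {θ : Set (Cyl m l)} (hθ : IsCylindric m l θ) {x : Cyl m l} {p q : ℤ}
    (hp : 0 ≤ p) (hq : 0 ≤ q) (h : x + pr m l (p, q) ∈ θ) : x ∈ θ :=
  hθ.2.2 _ h _ ((cle_iff _ _).mpr ⟨p, q, hp, hq, rfl⟩)

lemma mem_of_eq_add {θ : Set (Cyl m l)} (hθ : IsCylindric m l θ) {x y : Cyl m l} (p q : ℤ)
    (hp : 0 ≤ p) (hq : 0 ≤ q) (h : y ∈ θ) (hxy : y = x + pr m l (p, q)) : x ∈ θ :=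
  mem_of_add hθ hp hq (hxy ▸ h)

lemma ne_of_add (hm : 1 ≤ m) (hl : 1 ≤ l) {x : Cyl m l} {p q : ℤ} (hp : 0 ≤ p) (hq : 0 ≤ q)
    (h : 0 < p + q) : x + pr m l (p, q) ≠ x := by
  intro h'
  have := pr_nonneg_eq_zero hm hl hp hq (by simpa using h')
  omega

/-! ### The bottom set and the weight `P_θ` -/

lemma pr_add' (x : Cyl m l) (p q p' q' : ℤ) :
    x + pr m l (p, q) + pr m l (p', q') = x + pr m l (p + p', q + q') := by
  rw [add_assoc, ← map_add]
  rfl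

lemma pr_zero' (x : Cyl m l) : x + pr m l (0, 0) = x := by
  have : ((0, 0) : Z2) = 0 := rfl
  rw [this, map_zero, add_zero]

/-- A cell of `θ` is a bottom cell exactly when the next cell `x + (1, 1)` of the same
content is outside `θ`. -/
lemma isBottomCell_iff (hm : 1 ≤ m) (hl : 1 ≤ l) {θ : Set (Cyl m l)} (hθ : IsCylindric m l θ)
    (i : ZMod (m + l)) (x : Cyl m l) :
    IsBottomCell m l θ i x ↔ x ∈ θ ∧ con m l x = i ∧ x + pr m l (1, 1) ∉ θ := by
  refine and_congr_right fun hx => and_congr_right fun hi => ⟨fun h hD => ?_, fun h y hy hyi => ?_⟩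
  · have hc : con m l (x + pr m l (1, 1)) = i := by rw [map_add, con_pr, hi]; simp
    obtain ⟨p, q, hp, hq, h1⟩ := (cle_iff _ _).mp (h _ hD hc)
    rw [pr_add'] at h1
    exact ne_of_add hm hl (by omega) (by omega) (by omega) h1.symm
  · obtain ⟨k, rfl⟩ := eq_add_diag_of_con_eq (hyi.trans hi.symm)
    by_cases hk : 0 < k
    · exact absurd (mem_of_eq_add hθ (k - 1) (k - 1) (by omega) (by omega) hy
        (by rw [pr_add']; congr 3 <;> ring)) h
    · refine (cle_iff _ _).mpr ⟨-k, -k, by omega, by omega, ?_⟩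
      rw [pr_add', add_neg_cancel, pr_zero']

lemma mem_btm_iff (hm : 1 ≤ m) (hl : 1 ≤ l) {θ : Set (Cyl m l)} (hθ : IsCylindric m l θ)
    (x : Cyl m l) : x ∈ btm m l θ ↔ x ∈ θ ∧ x + pr m l (1, 1) ∉ θ := by
  constructor
  · rintro ⟨i, h⟩
    rw [isBottomCell_iff hm hl hθ] at h
    exact ⟨h.1, h.2.2⟩
  · rintro ⟨h1, h2⟩
    exact ⟨_, (isBottomCell_iff hm hl hθ _ _).mpr ⟨h1, rfl, h2⟩⟩

lemma bottom_unique {θ : Set (Cyl m l)} (hθ : IsCylindric m l θ) {x y : Cyl m l}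
    (hx : x ∈ θ) (hx' : x + pr m l (1, 1) ∉ θ) (hy : y ∈ θ) (hy' : y + pr m l (1, 1) ∉ θ)
    (h : con m l x = con m l y) : x = y := by
  obtain ⟨k, rfl⟩ := eq_add_diag_of_con_eq h
  rcases lt_trichotomy k 0 with hk | rfl | hk
  · refine absurd (mem_of_eq_add hθ (-k - 1) (-k - 1) (by omega) (by omega) hy ?_) hx'
    rw [pr_add', pr_add']
    conv_lhs => rw [← pr_zero' y]
    congr 3 <;> ring
  · exact pr_zero' y
  · refine absurd (mem_of_eq_add hθ (k - 1) (k - 1) (by omega) (by omega) hx ?_) hy'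
    rw [pr_add']
    congr 3 <;> ring

lemma exists_bottom {θ : Set (Cyl m l)} (hθ : IsCylindric m l θ) (i : ZMod (m + l)) :
    ∃ x ∈ θ, con m l x = i ∧ x + pr m l (1, 1) ∉ θ := by
  obtain ⟨x0, hx0⟩ := con_surjective (m := m) (l := l) i
  obtain ⟨u, hu⟩ := hθ.1
  obtain ⟨z, hz⟩ := (Set.ne_univ_iff_exists_notMem _).mp hθ.2.1
  obtain ⟨a, rfl⟩ := pr_mk_surjective x0
  obtain ⟨b, rfl⟩ := pr_mk_surjective u
  obtain ⟨c, rfl⟩ := pr_mk_surjective z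
  have hex : ∃ k : ℤ, pr m l a + pr m l (k, k) ∈ θ := by
    refine ⟨min (b.1 - a.1) (b.2 - a.2), mem_of_eq_add hθ (b.1 - a.1 - min (b.1 - a.1) (b.2 - a.2))
      (b.2 - a.2 - min (b.1 - a.1) (b.2 - a.2)) (by omega) (by omega) hu ?_⟩
    rw [pr_add', ← map_add]
    congr 1
    ext <;> simp
  have hbd : ∀ k : ℤ, pr m l a + pr m l (k, k) ∈ θ → k ≤ max (c.1 - a.1) (c.2 - a.2) := by
    intro k hk
    by_contra! hlt
    refine hz (mem_of_eq_add hθ (a.1 + k - c.1) (a.2 + k - c.2) (by omega) (by omega) hk ?_)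
    rw [← map_add, ← map_add]
    congr 1
    ext <;> simp
  obtain ⟨k, hk, hmax⟩ := Int.exists_greatest_of_bdd ⟨_, hbd⟩ hex
  refine ⟨_, hk, by rw [map_add, con_pr _, con_pr (k, k), ← hx0, con_pr]; simp, fun h => ?_⟩
  rw [pr_add'] at h
  have := hmax _ h
  omega

lemma mem_btmMax_iff (hm : 1 ≤ m) (hl : 1 ≤ l) {θ : Set (Cyl m l)} (hθ : IsCylindric m l θ)
    {x : Cyl m l} (hx : x ∈ θ) (hx' : x + pr m l (1, 1) ∉ θ) :
    x ∈ btmMax m l θ ↔ x + pr m l (0, 1) ∈ θ ∧ x + pr m l (1, 0) ∈ θ := by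
  have key : ∀ p q p' q' : ℤ, 0 ≤ p → 0 ≤ q → p + p' = 1 → q + q' = 1 → 0 < p + q →
      x ∈ btmMax m l θ → x + pr m l (p', q') ∈ θ := by
    intro p q p' q' hp hq h1 h2 hpq hmax
    by_contra hc
    have hxe : x = x + pr m l (-p, -q) + pr m l (p, q) := by
      rw [pr_add', neg_add_cancel, neg_add_cancel, pr_zero']
    have hy : x + pr m l (-p, -q) ∈ btm m l θ := by
      rw [mem_btm_iff hm hl hθ]
      refine ⟨mem_of_eq_add hθ p q hp hq hx hxe, ?_⟩
      rw [pr_add']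
      convert hc using 5 <;> omega
    have := hmax.2 _ hy ((cle_iff _ _).mpr ⟨p, q, hp, hq, hxe⟩)
    rw [this] at hxe
    exact ne_of_add hm hl hp hq hpq hxe.symm
  constructor
  · intro h
    exact ⟨key 1 0 0 1 (by omega) (by omega) (by omega) (by omega) (by omega) h,
      key 0 1 1 0 (by omega) (by omega) (by omega) (by omega) (by omega) h⟩
  · rintro ⟨hR, hB⟩
    refine ⟨(mem_btm_iff hm hl hθ x).mpr ⟨hx, hx'⟩, fun y hy hxy => ?_⟩
    rw [mem_btm_iff hm hl hθ] at hy
    obtain ⟨p, q, hp, hq, rfl⟩ := (cle_iff _ _).mp hxy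
    rw [pr_add'] at hR hB
    by_cases hp0 : p = 0
    · by_cases hq0 : q = 0
      · rw [hp0, hq0, pr_zero']
      · exact absurd (mem_of_eq_add hθ p (q - 1) (by omega) (by omega) hB
          (by rw [pr_add']; congr 3 <;> ring)) hy.2
    · exact absurd (mem_of_eq_add hθ (p - 1) q (by omega) (by omega) hR
          (by rw [pr_add']; congr 3 <;> ring)) hy.2

lemma mem_btmMin_iff (hm : 1 ≤ m) (hl : 1 ≤ l) {θ : Set (Cyl m l)} (hθ : IsCylindric m l θ)
    {x : Cyl m l} (hx : x ∈ θ) (hx' : x + pr m l (1, 1) ∉ θ) :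
    x ∈ btmMin m l θ ↔ x + pr m l (0, 1) ∉ θ ∧ x + pr m l (1, 0) ∉ θ := by
  have key : ∀ p q : ℤ, 0 ≤ p → 0 ≤ q → 0 < p + q →
      x ∈ btmMin m l θ → x + pr m l (p, q) ∉ θ := by
    intro p q hp hq hpq hmin hc
    have hy : x + pr m l (p, q) ∈ btm m l θ := by
      rw [mem_btm_iff hm hl hθ]
      refine ⟨hc, fun h => hx' (mem_of_eq_add hθ p q hp hq h ?_)⟩
      rw [pr_add', pr_add']
      congr 3 <;> ring
    exact ne_of_add hm hl hp hq hpq (hmin.2 _ hy ((cle_iff _ _).mpr ⟨p, q, hp, hq, rfl⟩))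
  constructor
  · intro h
    exact ⟨key 0 1 (by omega) (by omega) (by omega) h, key 1 0 (by omega) (by omega) (by omega) h⟩
  · rintro ⟨hR, hB⟩
    refine ⟨(mem_btm_iff hm hl hθ x).mpr ⟨hx, hx'⟩, fun y hy hxy => ?_⟩
    rw [mem_btm_iff hm hl hθ] at hy
    obtain ⟨p, q, hp, hq, rfl⟩ := (cle_iff _ _).mp hxy
    by_cases hp0 : p = 0
    · by_cases hq0 : q = 0
      · rw [hp0, hq0, pr_zero']
      · exact absurd (mem_of_eq_add hθ p (q - 1) (by omega) (by omega) hy.1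
          (by rw [pr_add']; congr 3 <;> ring)) hR
    · exact absurd (mem_of_eq_add hθ (p - 1) q (by omega) (by omega) hy.1
          (by rw [pr_add']; congr 3 <;> ring)) hB

open Classical in
/-- The coefficients of `P_θ` read off locally: `a_i` counts the two covered neighbours
`b_i + (0, 1)` and `b_i + (1, 0)` of `b_i` that lie in `θ`, minus one. -/
lemma aC_eq (hm : 1 ≤ m) (hl : 1 ≤ l) {θ : Set (Cyl m l)} (hθ : IsCylindric m l θ)
    {x : Cyl m l} (hx : x ∈ θ) (hx' : x + pr m l (1, 1) ∉ θ) :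
    aC m l θ (con m l x) = (if x + pr m l (0, 1) ∈ θ then 1 else 0)
      + (if x + pr m l (1, 0) ∈ θ then 1 else 0) - 1 := by
  have e : ∀ S : Set (Cyl m l),
      (∃ y, IsBottomCell m l θ (con m l x) y ∧ y ∈ S) ↔ x ∈ S := by
    intro S
    constructor
    · rintro ⟨y, hy, hS⟩
      rw [isBottomCell_iff hm hl hθ] at hy
      rwa [bottom_unique hθ hx hx' hy.1 hy.2.2 hy.2.1.symm]
    · intro hS
      exact ⟨x, (isBottomCell_iff hm hl hθ _ _).mpr ⟨hx, rfl, hx'⟩, hS⟩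
  rw [aC]
  simp only [e, mem_btmMax_iff hm hl hθ hx hx', mem_btmMin_iff hm hl hθ hx hx']
  by_cases h1 : x + pr m l (0, 1) ∈ θ <;> by_cases h2 : x + pr m l (1, 0) ∈ θ <;> simp [h1, h2]

/-! ### Removing a minimal cell -/

/-- `x` is a minimal cell of `θ`, in local terms. -/
structure IsMinCell (θ : Set (Cyl m l)) (x : Cyl m l) : Prop where
  mem : x ∈ θ
  right : x + pr m l (0, 1) ∉ θ
  below : x + pr m l (1, 0) ∉ θ

lemma IsMinCell.diag {θ : Set (Cyl m l)} (hθ : IsCylindric m l θ) {x : Cyl m l}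
    (h : IsMinCell θ x) : x + pr m l (1, 1) ∉ θ := fun hD =>
  h.right (mem_of_eq_add hθ 1 0 (by omega) (by omega) hD (by rw [pr_add']; rfl))

lemma aC_min (hm : 1 ≤ m) (hl : 1 ≤ l) {θ : Set (Cyl m l)} (hθ : IsCylindric m l θ)
    {x : Cyl m l} (h : IsMinCell θ x) : aC m l θ (con m l x) = -1 := by
  rw [aC_eq hm hl hθ h.mem (h.diag hθ), if_neg h.right, if_neg h.below]
  norm_num

/-- Removing a minimal cell of content `i` changes `P_θ` by `α_i`, i.e. applies `s_i` to it. -/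
lemma aC_remove (hm : 1 ≤ m) (hl : 1 ≤ l) {θ : Set (Cyl m l)} (hθ : IsCylindric m l θ)
    {x : Cyl m l} (h : IsMinCell θ x) (hθ' : IsCylindric m l (θ \ {x})) (j : ZMod (m + l)) :
    aC m l (θ \ {x}) j = aC m l θ j + cartan (m + l) (con m l x) j := by
  classical
  have : NeZero (m + l) := ⟨by omega⟩
  have hx' := h.diag hθ
  have hsub : ∀ p q : ℤ, 0 ≤ p → 0 ≤ q → 0 < p + q → x + pr m l (-p, -q) ∈ θ \ {x} := by
    intro p q hp hq hpq
    have hxe : x = x + pr m l (-p, -q) + pr m l (p, q) := by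
      rw [pr_add', neg_add_cancel, neg_add_cancel, pr_zero']
    refine ⟨mem_of_eq_add hθ p q hp hq h.mem hxe, fun hc => ?_⟩
    rw [Set.mem_singleton_iff] at hc
    rw [hc] at hxe
    exact ne_of_add hm hl hp hq hpq hxe.symm
  by_cases hj : j = con m l x
  · subst hj
    have hc : con m l (x + pr m l (-1, -1)) = con m l x := by rw [map_add, con_pr]; simp
    have hD : x + pr m l (-1, -1) + pr m l (1, 1) ∉ θ \ {x} := by
      rw [pr_add', neg_add_cancel, pr_zero']
      simp
    rw [cartan_self (by omega), aC_min hm hl hθ h, ← hc,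
      aC_eq hm hl hθ' (hsub 1 1 (by omega) (by omega) (by omega)) hD, pr_add', pr_add',
      if_pos (by simpa using hsub 1 0 (by omega) (by omega) (by omega)),
      if_pos (by simpa using hsub 0 1 (by omega) (by omega) (by omega))]
    norm_num
  · obtain ⟨y, hy, rfl, hyD⟩ := exists_bottom hθ j
    have hyx : y ≠ x := fun h => hj (by rw [h])
    have hR : y + pr m l (0, 1) = x ↔ con m l x - con m l y = 1 := by
      constructor
      · rintro rfl
        rw [map_add, con_pr]; simp
      · intro hc
        have h1 : y = x + pr m l (0, -1) := by
          refine bottom_unique hθ hy hyD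
            (by simpa using (hsub 0 1 (by omega) (by omega) (by omega)).1) ?_ ?_
          · rw [pr_add']
            exact h.below
          · rw [map_add, con_pr]
            push_cast
            linear_combination -hc
        rw [h1, pr_add']
        exact pr_zero' x
    have hB : y + pr m l (1, 0) = x ↔ con m l x - con m l y = -1 := by
      constructor
      · rintro rfl
        rw [map_add, con_pr]; simp
      · intro hc
        have h1 : y = x + pr m l (-1, 0) := by
          refine bottom_unique hθ hy hyD
            (by simpa using (hsub 1 0 (by omega) (by omega) (by omega)).1) ?_ ?_
          · rw [pr_add']
            exact h.right
          · rw [map_add, con_pr]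
            push_cast
            linear_combination -hc
        rw [h1, pr_add']
        exact pr_zero' x
    rw [aC_eq hm hl hθ hy hyD, aC_eq hm hl hθ' ⟨hy, hyx⟩ (fun h => hyD h.1), cartan,
      if_neg (Ne.symm hj)]
    simp only [← hR, ← hB, Set.mem_sdiff, Set.mem_singleton_iff]
    have aux : ∀ z : Cyl m l, (if z ∈ θ ∧ ¬ z = x then (1 : ℚ) else 0)
        = (if z ∈ θ then 1 else 0) + (if z = x then -1 else 0) := by
      intro z
      by_cases hz : z = x
      · simp [hz, h.mem]
      · simp [hz]
    rw [aux, aux]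
    ring

lemma pairP_eq_sum [NeZero (m + l)] (θ : Set (Cyl m l)) (β : Hw (m + l)) :
    pairP m l θ β = ∑ i, aC m l θ i * β.1 i := by
  rw [pairP, finsum_eq_sum_of_fintype]

/-- `⟨P_θ, ·⟩` as a linear form. -/
noncomputable def pairPL [NeZero (m + l)] (θ : Set (Cyl m l)) : Hw (m + l) →ₗ[ℚ] ℚ where
  toFun := pairP m l θ
  map_add' x y := by
    simp only [pairP_eq_sum, Prod.fst_add, Pi.add_apply, mul_add, Finset.sum_add_distrib]
  map_smul' c x := by
    simp only [pairP_eq_sum, Prod.smul_fst, Pi.smul_apply, smul_eq_mul, RingHom.id_apply,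
      Finset.mul_sum]
    exact Finset.sum_congr rfl fun i _ => by ring

lemma pairP_alpha [NeZero (m + l)] (θ : Set (Cyl m l)) (i : ZMod (m + l)) :
    pairP m l θ (alphaR (m + l) i) = aC m l θ i := by
  rw [pairP_eq_sum]
  simp [alphaR, Pi.single_apply]

lemma pairP_remove [NeZero (m + l)] (hm : 1 ≤ m) (hl : 1 ≤ l) {θ : Set (Cyl m l)}
    (hθ : IsCylindric m l θ) {x : Cyl m l} (h : IsMinCell θ x) (hθ' : IsCylindric m l (θ \ {x}))
    (β : Hw (m + l)) (hβ : β.2 = 0) :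
    pairP m l θ (sFun (m + l) (con m l x) β) = pairP m l (θ \ {x}) β := by
  have h1 : pairP m l θ (sFun (m + l) (con m l x) β)
      = pairP m l θ β + pairSimple (m + l) β (con m l x) := by
    change pairPL θ (β - _) = _
    rw [map_sub, map_smul]
    change pairP m l θ β - _ • pairP m l θ _ = _
    rw [pairP_alpha, aC_min hm hl hθ h, smul_eq_mul]
    ring
  rw [h1, pairP_eq_sum, pairP_eq_sum, pairSimple_eq_sum, hβ, zero_mul, add_zero,
    ← Finset.sum_add_distrib]
  refine Finset.sum_congr rfl fun j _ => ?_
  rw [aC_remove hm hl hθ h hθ']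
  ring

/-! ### Peeling off the first cell of a tableau -/

lemma IsTableau.isMinCell (hm : 1 ≤ m) (hl : 1 ≤ l) {θ : Set (Cyl m l)} {e : ℕ → Cyl m l}
    (he : IsTableau m l θ e) : IsMinCell θ (e 1) := by
  have key : ∀ p q : ℤ, 0 ≤ p → 0 ≤ q → 0 < p + q → e 1 + pr m l (p, q) ∉ θ := by
    intro p q hp hq hpq hc
    rw [← he.2.1] at hc
    obtain ⟨b, hb, hbe⟩ := hc
    have := he.2.2 b 1 hb le_rfl ((cle_iff _ _).mpr ⟨p, q, hp, hq, hbe⟩)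
      (by rw [hbe]; exact ne_of_add hm hl hp hq hpq)
    have hb : 1 ≤ b := hb
    omega
  exact ⟨he.2.1 ▸ ⟨1, le_refl 1, rfl⟩, key 0 1 (by omega) (by omega) (by omega),
    key 1 0 (by omega) (by omega) (by omega)⟩

lemma IsTableau.tail {θ : Set (Cyl m l)} {e : ℕ → Cyl m l}
    (he : IsTableau m l θ e) : IsTableau m l (θ \ {e 1}) (fun a => e (a + 1)) := by
  obtain ⟨hinj, himg, hord⟩ := he
  refine ⟨fun a _ b _ hab => ?_, ?_, fun a b ha hb hc hne => ?_⟩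
  · have := hinj (show 1 ≤ a + 1 by omega) (show 1 ≤ b + 1 by omega) hab
    omega
  · ext y
    constructor
    · rintro ⟨a, ha, rfl⟩
      have ha : 1 ≤ a := ha
      refine ⟨himg ▸ ⟨a + 1, show 1 ≤ a + 1 by omega, rfl⟩, fun hc => ?_⟩
      have := hinj (show 1 ≤ a + 1 by omega) (show 1 ≤ 1 by omega) hc
      omega
    · rintro ⟨hy, hne⟩
      rw [← himg] at hy
      obtain ⟨a, ha, rfl⟩ := hy
      have ha : 1 ≤ a := ha
      have ha1 : a ≠ 1 := fun h => hne (by rw [h]; rfl)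
      exact ⟨a - 1, show 1 ≤ a - 1 by omega, by simp only; congr 1; omega⟩
  · have := hord (a + 1) (b + 1) (by omega) (by omega) hc hne
    omega

lemma IsTableau.cylindric_tail {θ : Set (Cyl m l)} (hθ : IsCylindric m l θ) {e : ℕ → Cyl m l}
    (he : IsTableau m l θ e) : IsCylindric m l (θ \ {e 1}) := by
  refine ⟨?_, fun h => ?_, fun x hx y hxy => ⟨hθ.2.2 x hx.1 y hxy, fun hy => ?_⟩⟩
  · rw [← he.tail.2.1]
    exact ⟨_, 1, le_refl 1, rfl⟩
  · have : e 1 ∈ θ \ {e 1} := h ▸ Set.mem_univ _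
    exact this.2 rfl
  · have hx1 := hx.1
    rw [← he.2.1] at hx1
    obtain ⟨a, ha, rfl⟩ := hx1
    rw [Set.mem_singleton_iff] at hy
    subst hy
    have := he.2.2 a 1 ha le_rfl hxy hx.2
    have ha : 1 ≤ a := ha
    omega

lemma tabWord_succ (e : ℕ → Cyl m l) (n : ℕ) :
    tabWord m l e (n + 1) = con m l (e 1) :: tabWord m l (fun a => e (a + 1)) n := by
  simp [tabWord, List.range_succ_eq_map]

lemma pluscule_tabWord (hm : 1 ≤ m) (hl : 1 ≤ l) (n : ℕ) :
    ∀ (θ : Set (Cyl m l)) (e : ℕ → Cyl m l), IsCylindric m l θ → IsTableau m l θ e →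
      Pluscule m l θ (wordProd (m + l) (tabWord m l e n)) := by
  have : NeZero (m + l) := ⟨by omega⟩
  have hκ : 2 ≤ m + l := by omega
  induction n with
  | zero =>
    rintro θ e - - β ⟨hp, γ, hγ, rfl⟩
    exact absurd hp (not_Rpos_of_nonpos hκ (nonpos_of_Rneg hγ))
  | succ n ih =>
    intro θ e hθ he β hβ
    have hmin := he.isMinCell hm hl
    have hθ' := he.cylindric_tail hθ
    rw [tabWord_succ] at hβ
    rcases invSet_cons hκ hβ with rfl | h1
    · rw [pairP_alpha, aC_min hm hl hθ hmin]
    · rw [← ih _ _ hθ' he.tail _ h1,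
        ← pairP_remove hm hl hθ hmin hθ' _ h1.1.2.1, sFun_sFun hκ]

end Cylinder

/-- Proposition 2.16: w_{θ,T}[n] is P_θ-pluscule and fully commutative. -/
theorem statement_9 (m l : ℕ) (hm : 1 ≤ m) (hl : 1 ≤ l)
    (θ : Set (Cyl m l)) (hθ : IsCylindric m l θ)
    (e : ℕ → Cyl m l) (he : IsTableau m l θ e) (n : ℕ) (hn : 1 ≤ n) :
    Pluscule m l θ (wordProd (m + l) (tabWord m l e n)) ∧
    FullyComm (m + l) (wordProd (m + l) (tabWord m l e n)) := by
  have : NeZero (m + l) := ⟨by omega⟩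
  have hp := pluscule_tabWord hm hl n θ e hθ he
  exact ⟨hp, fullyComm_of_minuscule (by omega) (pairPL θ) _ hp⟩

end CylPaper
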